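/- Let K be a complete non-archimedean field of residue characteristic p > 0 with |p| < 1, let c ∈ K, ρ ≥ 0, and a ∈ K. Then the Gauss seminorm of the polynomial T^p − a at the point x_{c,ρ} satisfies x_{c,ρ}(T^p − a) = max(|c^p − a|, |p|·|c|^{p−1}·ρ, ρ^p). -/

import Mathlib

open Polynomial

/-- The Gauss seminorm `x_{c,ρ}` on `K[T]`:
`x_{c,ρ}(f) = sup_n ‖f^{(n)}(c)/n!‖ · ρ^n`, expressed via Hasse derivatives. -/
noncomputable def gaussSeminorm {K : Type*} [NontriviallyNormedField K]
    (c : K) (ρ : ℝ) (f : Polynomial K) : ℝ :=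
  ⨆ n : ℕ, ‖(Polynomial.hasseDeriv n f).eval c‖ * ρ ^ n

theorem eval_hasseDeriv_X_pow_sub_C {R : Type*} [CommRing R] (m n : ℕ) (hn : 0 < n) (c a : R) :
    (hasseDeriv n (X ^ m - C a)).eval c = (m.choose n : R) * c ^ (m - n) := by
  rw [map_sub, hasseDeriv_C n a hn, sub_zero, ← monomial_one_right_eq_X_pow, hasseDeriv_monomial,
    eval_monomial, mul_one]

theorem IsUltrametricDist.norm_natCast_le_of_dvd {K : Type*} [NormedField K] [IsUltrametricDist K]
    {m n : ℕ} (h : m ∣ n) : ‖(n : K)‖ ≤ ‖(m : K)‖ := by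
  obtain ⟨k, rfl⟩ := h
  rw [Nat.cast_mul, norm_mul]
  exact mul_le_of_le_one_right (norm_nonneg _) (IsUltrametricDist.norm_natCast_le_one K k)

theorem pow_sub_mul_pow_le_max {x y : ℝ} (hx : 0 ≤ x) (hy : 0 ≤ y) {m n : ℕ} (hn : 0 < n)
    (hnm : n ≤ m) : x ^ (m - n) * y ^ n ≤ max (x ^ (m - 1) * y) (y ^ m) := by
  rcases le_total y x with h | h
  · refine le_max_of_le_left ?_
    calc x ^ (m - n) * y ^ n = x ^ (m - n) * (y ^ (n - 1) * y) := by
          rw [pow_sub_one_mul hn.ne']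
      _ ≤ x ^ (m - n) * (x ^ (n - 1) * y) := by gcongr
      _ = x ^ (m - 1) * y := by
          rw [← mul_assoc, ← pow_add]; congr 2; omega
  · refine le_max_of_le_right ?_
    calc x ^ (m - n) * y ^ n ≤ y ^ (m - n) * y ^ n := by gcongr
      _ = y ^ m := by rw [← pow_add, Nat.sub_add_cancel hnm]

/-- For `K` of residue characteristic `p` (`|p| < 1`), the Gauss seminorm of `T^p − a`
at `x_{c,ρ}` is `max(|c^p − a|, |p|·|c|^{p−1}·ρ, ρ^p)`. -/
theorem gaussSeminorm_X_pow_p_sub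
    {K : Type*} [NontriviallyNormedField K] [CompleteSpace K] [IsUltrametricDist K]
    (p : ℕ) (hp : p.Prime) (hpK : ‖(p : K)‖ < 1)
    (c a : K) (ρ : ℝ) (hρ : 0 ≤ ρ) :
    gaussSeminorm c ρ (X ^ p - C a)
      = max (max ‖c ^ p - a‖ (‖(p : K)‖ * ‖c‖ ^ (p - 1) * ρ)) (ρ ^ p) := by
  have term_zero : ‖(hasseDeriv 0 (X ^ p - C a)).eval c‖ * ρ ^ 0 = ‖c ^ p - a‖ := by simp
  have term_pos (n : ℕ) (hn : 0 < n) : ‖(hasseDeriv n (X ^ p - C a)).eval c‖ * ρ ^ n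
      = ‖(p.choose n : K)‖ * ‖c‖ ^ (p - n) * ρ ^ n := by
    rw [eval_hasseDeriv_X_pow_sub_C p n hn, norm_mul, norm_pow]
  have le_bound (n : ℕ) : ‖(hasseDeriv n (X ^ p - C a)).eval c‖ * ρ ^ n
      ≤ max (max ‖c ^ p - a‖ (‖(p : K)‖ * ‖c‖ ^ (p - 1) * ρ)) (ρ ^ p) := by
    rcases n.eq_zero_or_pos with rfl | hn
    · rw [term_zero]
      exact le_max_of_le_left (le_max_left _ _)
    rw [term_pos n hn]
    rcases lt_trichotomy n p with hnp | rfl | hnp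
    · calc ‖(p.choose n : K)‖ * ‖c‖ ^ (p - n) * ρ ^ n
          ≤ ‖(p : K)‖ * (‖c‖ ^ (p - n) * ρ ^ n) := by
            rw [mul_assoc]
            gcongr
            exact IsUltrametricDist.norm_natCast_le_of_dvd (hp.dvd_choose_self hn.ne' hnp)
        _ ≤ ‖(p : K)‖ * max (‖c‖ ^ (p - 1) * ρ) (ρ ^ p) := by
            gcongr
            exact pow_sub_mul_pow_le_max (norm_nonneg c) hρ hn hnp.le
        _ = max (‖(p : K)‖ * ‖c‖ ^ (p - 1) * ρ) (‖(p : K)‖ * ρ ^ p) := by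
            rw [mul_max_of_nonneg _ _ (norm_nonneg _), mul_assoc]
        _ ≤ _ := max_le_max (le_max_right _ _)
            (mul_le_of_le_one_left (pow_nonneg hρ p) hpK.le)
    · simp
    · rw [Nat.choose_eq_zero_of_lt hnp]
      simp [pow_nonneg hρ p]
  have bdd : BddAbove (Set.range fun n : ℕ ↦
      ‖(hasseDeriv n (X ^ p - C a)).eval c‖ * ρ ^ n) := ⟨_, Set.forall_mem_range.2 le_bound⟩
  refine le_antisymm (ciSup_le le_bound) (max_le (max_le ?_ ?_) ?_)
  · exact term_zero.symm.le.trans (le_ciSup bdd 0)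
  · refine le_trans (le_of_eq ?_) ((term_pos 1 one_pos).symm.le.trans (le_ciSup bdd 1))
    rw [Nat.choose_one_right, pow_one]
  · refine le_trans (le_of_eq ?_) ((term_pos p hp.pos).symm.le.trans (le_ciSup bdd p))
    simp
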